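/- Let F be a field, G an abelian group, and let U and V be G-graded simple F-algebras such that M(U) and M(V) satisfy ordinary polynomial identities. If U and V satisfy the same ordinary polynomial identities, then dim_{Γ(U)} U = dim_{Γ(V)} V, i.e. the dimensions of U over its graded centroid and of V over its graded centroid coincide. -/

import Mathlib

noncomputable section

variable (K : Type*) [Field K]
variable {G : Type*} [CommGroup G] [DecidableEq G]
variable {A : Type*} [NonUnitalNonAssocSemiring A] [Module K A]
  [SMulCommClass K A A] [IsScalarTower K A A]

/-- `𝒜` is a `G`-grading of the (not necessarily associative or unital) algebra `A`. -/
def IsAlgGrading (𝒜 : G → Submodule K A) : Prop :=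
  DirectSum.IsInternal 𝒜 ∧ ∀ (g h : G), ∀ a ∈ 𝒜 g, ∀ b ∈ 𝒜 h, a * b ∈ 𝒜 (g * h)

/-- A submodule is homogeneous if it is the sum of its intersections with the components. -/
def IsHomogSubmodule (𝒜 : G → Submodule K A) (I : Submodule K A) : Prop :=
  I = ⨆ g, I ⊓ 𝒜 g

/-- two-sided ideal of a nonassociative algebra -/
def IsMulIdeal (I : Submodule K A) : Prop :=
  ∀ a : A, ∀ x ∈ I, a * x ∈ I ∧ x * a ∈ I

/-- graded simple: `A·A ≠ 0` and no nontrivial homogeneous ideals. -/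
def IsGradedSimple (𝒜 : G → Submodule K A) : Prop :=
  (∃ a b : A, a * b ≠ 0) ∧
    ∀ I : Submodule K A, IsMulIdeal K I → IsHomogSubmodule K 𝒜 I → I = ⊥ ∨ I = ⊤

/-- The multiplication algebra: the subalgebra of `End_K A` generated by left and right
multiplications. -/
def MultAlg : NonUnitalSubalgebra K (Module.End K A) :=
  NonUnitalAlgebra.adjoin K
    (Set.range (LinearMap.mulLeft K (A := A)) ∪ Set.range (LinearMap.mulRight K (A := A)))

/-- The homogeneous component of degree `h` of `End_K A`: maps sending `𝒜 g` into `𝒜 (h*g)`. -/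
def endGrading (𝒜 : G → Submodule K A) (h : G) : Submodule K (Module.End K A) where
  carrier := {φ | ∀ g : G, ∀ x ∈ 𝒜 g, φ x ∈ 𝒜 (h * g)}
  add_mem' := fun hf hg g x hx => (𝒜 _).add_mem (hf g x hx) (hg g x hx)
  zero_mem' := fun g x hx => (𝒜 _).zero_mem
  smul_mem' := fun c f hf g x hx => (𝒜 _).smul_mem c (hf g x hx)

/-- The centroid of `A`: endomorphisms commuting with all left and right multiplications. -/
def centroid : Submodule K (Module.End K A) where
  carrier := {φ | ∀ a x : A, φ (a * x) = a * φ x ∧ φ (x * a) = φ x * a}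
  add_mem' := by
    intro f g hf hg a x
    refine ⟨?_, ?_⟩ <;>
      simp [LinearMap.add_apply, (hf a x).1, (hg a x).1, (hf a x).2, (hg a x).2, mul_add, add_mul]
  zero_mem' := by intro a x; simp
  smul_mem' := by
    intro c f hf a x
    refine ⟨?_, ?_⟩ <;>
      simp [LinearMap.smul_apply, (hf a x).1, (hf a x).2, mul_smul_comm, smul_mul_assoc]

/-- The graded centroid `Γ(A)`: the sums of homogeneous centroid elements. -/
def gradedCentroid (𝒜 : G → Submodule K A) : Submodule K (Module.End K A) :=
  ⨆ h : G, centroid K ⊓ endGrading K 𝒜 h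

/-- graded polynomial identity, variables indexed by `G × ℕ`, the variable `(g, i)` having
degree `g`. -/
def IsGradedPI (𝒜 : G → Submodule K A) (f : FreeNonUnitalNonAssocAlgebra K (G × ℕ)) : Prop :=
  ∀ v : G × ℕ → A, (∀ p, v p ∈ 𝒜 p.1) → FreeNonUnitalNonAssocAlgebra.lift K v f = 0

/-- ordinary polynomial identity of a not necessarily associative algebra -/
def IsPI (f : FreeNonUnitalNonAssocAlgebra K ℕ) : Prop :=
  ∀ v : ℕ → A, FreeNonUnitalNonAssocAlgebra.lift K v f = 0

/-- A subset `S` of an associative unital `K`-algebra `B` satisfies an ordinary polynomial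
identity. -/
def SatisfiesOrdinaryPI {B : Type*} [Ring B] [Algebra K B] (S : Set B) : Prop :=
  ∃ f : FreeAlgebra K ℕ, f ≠ 0 ∧
    ∀ v : ℕ → B, (∀ i, v i ∈ S) → FreeAlgebra.lift K v f = 0

/-- isomorphism of `G`-graded algebras -/
def IsGradedIso {B : Type*} [NonUnitalNonAssocSemiring B] [Module K B]
    (𝒜 : G → Submodule K A) (ℬ : G → Submodule K B) : Prop :=
  ∃ ψ : A ≃ₗ[K] B, (∀ x y : A, ψ (x * y) = ψ x * ψ y) ∧
    ∀ g : G, (𝒜 g).map (ψ : A →ₗ[K] B) = ℬ g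

end

noncomputable section

variable (K : Type*) [Field K]

/-- `f` is an ordinary (associative) polynomial identity of the subset `S` of the associative
unital algebra `B`. -/
def IsAssocPIOn {B : Type*} [Ring B] [Algebra K B] (S : Set B) (f : FreeAlgebra K ℕ) : Prop :=
  ∀ v : ℕ → B, (∀ i, v i ∈ S) → FreeAlgebra.lift K v f = 0

end

/-!
On a graded simple algebra `A` the multiplication algebra `M(A)` acts densely: for homogeneous
`v₁, …, vₙ` that `M(A)` moves to arbitrary `n`-tuples, every further homogeneous `u` either lies in
the `Γ(A)`-span of the `vᵢ` or extends them to a longer family of the same kind. Hence a maximal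
such family is a `Γ(A)`-basis. A polynomial identity of `M(A)` bounds the length of these families:
along a word `w = j₁⋯jₖ` of the identity, elements of `M(A)` can be made to move one vector through
the suffixes of `w` and to annihilate it under every other word.

The dimension is visible in ordinary identities through the alternating expression
`∑ σ, sign σ • s (r₁ x_{σ 1} * s (r₂ x_{σ 2} * ⋯ * b))` with `s, rᵢ` multiplication operators. These
operators are `Γ`-linear, so it vanishes identically when the `Γ`-dimension is less than `n`; on a
transitive family of length `n` density yields `s, rᵢ` for which only the term `σ = 1` survives. As
`s` and the `rᵢ` involve finitely many elements, the expression is the value of an element of the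
free algebra.
-/

section Decomposition

variable {F : Type*} [Field F] {ι : Type*} [DecidableEq ι]
  {V : Type*} [AddCommGroup V] [Module F V] {𝒱 : ι → Submodule F V}

/-- The projection of an internal direct sum onto its component of index `i`, viewed as an
endomorphism of the whole space. -/
noncomputable def homogProj (h𝒱 : DirectSum.IsInternal 𝒱) (i : ι) : Module.End F V :=
  (𝒱 i).subtype ∘ₗ DirectSum.component F ι (fun j => 𝒱 j) i ∘ₗ
    (LinearEquiv.ofBijective (DirectSum.coeLinearMap 𝒱) h𝒱).symm

lemma homogProj_mem (h𝒱 : DirectSum.IsInternal 𝒱) (i : ι) (x : V) :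
    homogProj h𝒱 i x ∈ 𝒱 i :=
  Subtype.mem _

lemma homogProj_of_mem (h𝒱 : DirectSum.IsInternal 𝒱) {i : ι} {x : V} (hx : x ∈ 𝒱 i) :
    homogProj h𝒱 i x = x :=
  congrArg Subtype.val (h𝒱.ofBijective_coeLinearMap_of_mem hx)

lemma homogProj_of_mem_of_ne (h𝒱 : DirectSum.IsInternal 𝒱) {i j : ι} (hij : i ≠ j) {x : V}
    (hx : x ∈ 𝒱 i) : homogProj h𝒱 j x = 0 :=
  congrArg Subtype.val (h𝒱.ofBijective_coeLinearMap_of_mem_ne hij hx)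

lemma linearMap_ext_of_isInternal (h𝒱 : DirectSum.IsInternal 𝒱) {W : Type*} [AddCommGroup W]
    [Module F W] {f f' : V →ₗ[F] W} (h : ∀ i, ∀ x ∈ 𝒱 i, f x = f' x) : f = f' := by
  let := h𝒱.chooseDecomposition
  exact DirectSum.decompose_lhom_ext 𝒱 fun i => LinearMap.ext fun x => h i x x.2

lemma mem_iSup_inf_of_homogProj_mem (h𝒱 : DirectSum.IsInternal 𝒱) {I : Submodule F V} {x : V}
    (hx : ∀ i, homogProj h𝒱 i x ∈ I) : x ∈ ⨆ i, I ⊓ 𝒱 i := by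
  classical
  let e := LinearEquiv.ofBijective (DirectSum.coeLinearMap 𝒱) h𝒱
  have hsum : x = ∑ i ∈ (e.symm x).support, homogProj h𝒱 i x :=
    (e.apply_symm_apply x).symm.trans (DirectSum.coeLinearMap_eq_dfinsuppSum 𝒱 (e.symm x))
  rw [hsum]
  exact sum_mem fun i _ => Submodule.mem_iSup_of_mem i ⟨hx i, homogProj_mem h𝒱 i x⟩

end Decomposition

lemma iSup_mul_iSup_le_of_mul_le {R S G : Type*} [CommSemiring R] [Semiring S] [Algebra R S]
    [Mul G] {E : G → Submodule R S} (hE : ∀ g h, E g * E h ≤ E (g * h)) :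
    (⨆ g, E g) * (⨆ g, E g) ≤ ⨆ g, E g := by
  simp only [Submodule.iSup_mul, Submodule.mul_iSup]
  exact iSup_le fun h => iSup_le fun g => (hE g h).trans (le_iSup E (g * h))

section EndGrading

variable {F : Type*} [Field F] {G : Type*} [CommGroup G]
  {A : Type*} [NonUnitalNonAssocRing A] [Module F A] {𝒜 : G → Submodule F A}

lemma endGrading_mul_le (g h : G) :
    endGrading F 𝒜 g * endGrading F 𝒜 h ≤ endGrading F 𝒜 (g * h) :=
  Submodule.mul_le.2 fun _ hr _ hs k x hx => by
    rw [mul_assoc]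
    exact hr _ _ (hs k x hx)

variable [DecidableEq G]

lemma apply_homogProj_of_mem_endGrading (h𝒜 : DirectSum.IsInternal 𝒜) {h : G}
    {r : Module.End F A} (hr : r ∈ endGrading F 𝒜 h) (g : G) (x : A) :
    r (homogProj h𝒜 g x) = homogProj h𝒜 (h * g) (r x) := by
  suffices r ∘ₗ homogProj h𝒜 g = homogProj h𝒜 (h * g) ∘ₗ r from LinearMap.congr_fun this x
  refine linearMap_ext_of_isInternal h𝒜 fun k y hy => ?_
  simp only [LinearMap.comp_apply]
  rcases eq_or_ne k g with rfl | hk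
  · rw [homogProj_of_mem h𝒜 hy, homogProj_of_mem h𝒜 (hr k y hy)]
  · rw [homogProj_of_mem_of_ne h𝒜 hk hy, map_zero,
      homogProj_of_mem_of_ne h𝒜 (mul_right_injective h |>.ne hk) (hr k y hy)]

lemma mulLeft_mem_endGrading [SMulCommClass F A A] (h𝒜 : IsAlgGrading F 𝒜) {g : G} {a : A}
    (ha : a ∈ 𝒜 g) :
    LinearMap.mulLeft F a ∈ endGrading F 𝒜 g :=
  fun k x hx => h𝒜.2 g k a ha x hx

lemma mulRight_mem_endGrading [IsScalarTower F A A] (h𝒜 : IsAlgGrading F 𝒜) {g : G} {a : A}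
    (ha : a ∈ 𝒜 g) :
    LinearMap.mulRight F a ∈ endGrading F 𝒜 g :=
  fun k x hx => mul_comm k g ▸ h𝒜.2 k g x hx a ha

end EndGrading

section MultAlg

variable {F : Type*} [Field F] {A : Type*} [NonUnitalNonAssocRing A] [Module F A]
  [SMulCommClass F A A] [IsScalarTower F A A]

lemma mulLeft_mem_multAlg (a : A) : LinearMap.mulLeft F a ∈ MultAlg F (A := A) :=
  NonUnitalAlgebra.subset_adjoin F (Or.inl ⟨a, rfl⟩)

lemma mulRight_mem_multAlg (a : A) : LinearMap.mulRight F a ∈ MultAlg F (A := A) :=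
  NonUnitalAlgebra.subset_adjoin F (Or.inr ⟨a, rfl⟩)

lemma apply_comm_of_mem_multAlg_of_mem_centroid {r c : Module.End F A}
    (hr : r ∈ MultAlg F (A := A)) (hc : c ∈ centroid F (A := A)) (x : A) :
    r (c x) = c (r x) := by
  have hle : MultAlg F (A := A) ≤ NonUnitalSubalgebra.centralizer F {c} := by
    refine NonUnitalAlgebra.adjoin_le ?_
    rintro _ (⟨a, rfl⟩ | ⟨a, rfl⟩) _ rfl
    · exact LinearMap.ext fun y => (hc a y).1
    · exact LinearMap.ext fun y => (hc a y).2
  exact (LinearMap.congr_fun (hle hr c rfl) x).symm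

variable {G : Type*} [CommGroup G] [DecidableEq G] {𝒜 : G → Submodule F A}

lemma multAlg_le_iSup_inf_endGrading (h𝒜 : IsAlgGrading F 𝒜) :
    (MultAlg F (A := A)).toSubmodule ≤
      ⨆ g, (MultAlg F (A := A)).toSubmodule ⊓ endGrading F 𝒜 g := by
  set E : G → Submodule F (Module.End F A) :=
    fun g => (MultAlg F (A := A)).toSubmodule ⊓ endGrading F 𝒜 g
  have hE_mul : (⨆ g, E g) * (⨆ g, E g) ≤ ⨆ g, E g :=
    iSup_mul_iSup_le_of_mul_le fun g h => Submodule.mul_le.2 fun r hr s hs =>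
      ⟨(MultAlg F (A := A)).mul_mem hr.1 hs.1,
        endGrading_mul_le g h (Submodule.mul_mem_mul hr.2 hs.2)⟩
  have hmap : ∀ m : A →ₗ[F] Module.End F A, (∀ g, ∀ a ∈ 𝒜 g, m a ∈ E g) →
      ∀ a, m a ∈ ⨆ g, E g := by
    intro m hm a
    have hle : (⨆ g, 𝒜 g) ≤ (⨆ g, E g).comap m :=
      iSup_le fun g a ha => Submodule.mem_iSup_of_mem g (hm g a ha)
    exact hle (h𝒜.1.submodule_iSup_eq_top ▸ Submodule.mem_top)
  refine NonUnitalAlgebra.adjoin_le (S := (⨆ g, E g).toNonUnitalSubalgebra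
    fun r s hr hs => hE_mul (Submodule.mul_mem_mul hr hs)) ?_
  rintro _ (⟨a, rfl⟩ | ⟨a, rfl⟩)
  · exact hmap (LinearMap.mul F A)
      (fun g a ha => ⟨mulLeft_mem_multAlg a, mulLeft_mem_endGrading h𝒜 ha⟩) a
  · exact hmap (LinearMap.mul F A).flip
      (fun g a ha => ⟨mulRight_mem_multAlg a, mulRight_mem_endGrading h𝒜 ha⟩) a

lemma exists_mem_multAlg_apply_eq_homogProj (h𝒜 : IsAlgGrading F 𝒜) {r : Module.End F A}
    (hr : r ∈ MultAlg F (A := A)) (h : G) :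
    ∃ r' ∈ MultAlg F (A := A), ∀ g, ∀ x ∈ 𝒜 g, r' x = homogProj h𝒜.1 (h * g) (r x) := by
  refine Submodule.iSup_induction _ (motive := fun r => ∃ r' ∈ MultAlg F (A := A),
    ∀ g, ∀ x ∈ 𝒜 g, r' x = homogProj h𝒜.1 (h * g) (r x))
    (multAlg_le_iSup_inf_endGrading h𝒜 hr) ?_ ?_ ?_
  · rintro k r ⟨hr, hrk⟩
    rcases eq_or_ne k h with rfl | hk
    · exact ⟨r, hr, fun g x hx => (homogProj_of_mem h𝒜.1 (hrk g x hx)).symm⟩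
    · exact ⟨0, zero_mem _, fun g x hx =>
        (homogProj_of_mem_of_ne h𝒜.1 (mul_left_injective g |>.ne hk) (hrk g x hx)).symm⟩
  · exact ⟨0, zero_mem _, by simp⟩
  · rintro r s ⟨r', hr', hrr'⟩ ⟨s', hs', hss'⟩
    exact ⟨r' + s', add_mem hr' hs', fun g x hx => by
      simp only [LinearMap.add_apply, map_add, hrr' g x hx, hss' g x hx]⟩

end MultAlg

section GradedSimple

variable {F : Type*} [Field F] {G : Type*} [DecidableEq G]
  {A : Type*} [NonUnitalNonAssocRing A] [Module F A] {𝒜 : G → Submodule F A}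

lemma eq_bot_or_eq_top_of_homogProj_mem (h𝒜 : DirectSum.IsInternal 𝒜)
    (hA : IsGradedSimple F 𝒜) {I : Submodule F A} (hI : IsMulIdeal F I)
    (hproj : ∀ x ∈ I, ∀ g, homogProj h𝒜 g x ∈ I) : I = ⊥ ∨ I = ⊤ :=
  hA.2 I hI <| le_antisymm (fun x hx => mem_iSup_inf_of_homogProj_mem h𝒜 (hproj x hx))
    (iSup_le fun _ => inf_le_left)

variable [CommGroup G] [SMulCommClass F A A] [IsScalarTower F A A]

lemma eq_zero_of_forall_mul_eq_zero (h𝒜 : IsAlgGrading F 𝒜) (hA : IsGradedSimple F 𝒜) {x : A}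
    (hleft : ∀ a, a * x = 0) (hright : ∀ a, x * a = 0) : x = 0 := by
  let I : Submodule F A := LinearMap.ker (LinearMap.mul F A) ⊓
    LinearMap.ker (LinearMap.mul F A).flip
  have mem_I {y : A} : y ∈ I ↔ (∀ a, y * a = 0) ∧ ∀ a, a * y = 0 := by
    simp [I, LinearMap.ext_iff]
  have hI : IsMulIdeal F I := fun a y hy => by
    obtain ⟨hya, hay⟩ := mem_I.1 hy
    simp [hya a, hay a]
  have hproj : ∀ y ∈ I, ∀ g, homogProj h𝒜.1 g y ∈ I := by
    intro y hy g
    obtain ⟨hya, hay⟩ := mem_I.1 hy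
    refine ⟨linearMap_ext_of_isInternal h𝒜.1 fun h a ha => ?_,
      linearMap_ext_of_isInternal h𝒜.1 fun h a ha => ?_⟩
    · simpa [hya a] using
        apply_homogProj_of_mem_endGrading h𝒜.1 (mulRight_mem_endGrading h𝒜 ha) g y
    · simpa [hay a] using
        apply_homogProj_of_mem_endGrading h𝒜.1 (mulLeft_mem_endGrading h𝒜 ha) g y
  rcases eq_bot_or_eq_top_of_homogProj_mem h𝒜.1 hA hI hproj with hbot | htop
  · exact (Submodule.mem_bot F).1 (hbot ▸ mem_I.2 ⟨hright, hleft⟩)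
  · obtain ⟨a, b, hab⟩ := hA.1
    exact absurd ((mem_I.1 (htop ▸ Submodule.mem_top : a ∈ I)).1 b) hab

lemma exists_homogeneous_mul_ne_zero (h𝒜 : IsAlgGrading F 𝒜) (hA : IsGradedSimple F 𝒜) :
    ∃ a b : A, SetLike.IsHomogeneousElem 𝒜 (a * b) ∧ a * b ≠ 0 := by
  by_contra! hcon
  obtain ⟨a, b, hab⟩ := hA.1
  have hmul : LinearMap.mul F A = 0 :=
    linearMap_ext_of_isInternal h𝒜.1 fun g x hx =>
      linearMap_ext_of_isInternal h𝒜.1 fun h y hy => hcon x y ⟨g * h, h𝒜.2 g h x hx y hy⟩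
  exact hab (LinearMap.congr_fun₂ hmul a b)

end GradedSimple

section GradedCentroid

variable {F : Type*} [Field F] {G : Type*} [CommGroup G]
  {A : Type*} [NonUnitalNonAssocRing A] [Module F A] [SMulCommClass F A A] [IsScalarTower F A A]

lemma gradedCentroid_le_centroid (𝒜 : G → Submodule F A) :
    gradedCentroid F 𝒜 ≤ centroid F :=
  iSup_le fun _ => inf_le_left

lemma centroid_mul_le : centroid F * centroid F ≤ centroid F (A := A) :=
  Submodule.mul_le.2 fun c hc d hd a x => by
    simp [(hd a x).1, (hd a x).2, (hc a (d x)).1, (hc a (d x)).2]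

lemma one_mem_gradedCentroid (𝒜 : G → Submodule F A) : 1 ∈ gradedCentroid F 𝒜 :=
  Submodule.mem_iSup_of_mem 1 ⟨fun _ _ => ⟨rfl, rfl⟩, fun g x hx => by simpa using hx⟩

lemma gradedCentroid_mul_le (𝒜 : G → Submodule F A) :
    gradedCentroid F 𝒜 * gradedCentroid F 𝒜 ≤ gradedCentroid F 𝒜 := by
  refine iSup_mul_iSup_le_of_mul_le fun g h => Submodule.mul_le.2 fun c hc d hd => ⟨?_, ?_⟩
  · exact centroid_mul_le (Submodule.mul_mem_mul hc.1 hd.1)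
  · exact endGrading_mul_le g h (Submodule.mul_mem_mul hc.2 hd.2)

/-- The graded centroid `Γ(A)` as a subalgebra of `End_F A`, so that `A` is a `Γ(A)`-module. -/
def gradedCentroidSubalgebra (𝒜 : G → Submodule F A) : Subalgebra F (Module.End F A) :=
  (gradedCentroid F 𝒜).toSubalgebra (one_mem_gradedCentroid 𝒜)
    fun _ _ hc hd => gradedCentroid_mul_le 𝒜 (Submodule.mul_mem_mul hc hd)

lemma coe_mem_centroid {𝒜 : G → Submodule F A} (c : gradedCentroidSubalgebra 𝒜) :
    (c : Module.End F A) ∈ centroid F :=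
  gradedCentroid_le_centroid 𝒜 c.2

lemma apply_smul_of_mem_multAlg {𝒜 : G → Submodule F A} {r : Module.End F A}
    (hr : r ∈ MultAlg F (A := A)) (c : gradedCentroidSubalgebra 𝒜) (x : A) :
    r (c • x) = c • r x :=
  apply_comm_of_mem_multAlg_of_mem_centroid hr (coe_mem_centroid c) x

lemma centroid_commute [DecidableEq G] {𝒜 : G → Submodule F A} (h𝒜 : IsAlgGrading F 𝒜)
    (hA : IsGradedSimple F 𝒜) {c d : Module.End F A} (hc : c ∈ centroid F)
    (hd : d ∈ centroid F) : c * d = d * c := by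
  ext x
  simp only [Module.End.mul_apply]
  rw [← sub_eq_zero]
  refine eq_zero_of_forall_mul_eq_zero h𝒜 hA (fun a => ?_) (fun a => ?_)
  · rw [mul_sub, sub_eq_zero, ← (hc a _).1, (hc (d x) a).2, ← (hd (c a) x).1, ← (hc x a).2,
      (hc a x).1, (hd a _).1]
  · rw [sub_mul, sub_eq_zero, ← (hc a _).2, (hc (d x) a).1, ← (hd (c a) x).2, ← (hc x a).1,
      (hc a x).2, (hd a _).2]

end GradedCentroid

section Transitive

variable {F : Type*} [Field F] {V : Type*} [AddCommGroup V] [Module F V] {ι : Type*}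

/-- The set `S` of endomorphisms moves the family `v` to an arbitrary family of vectors. This is
the density condition of Jacobson's theorem. -/
def IsTransitiveOn (S : Set (Module.End F V)) (v : ι → V) : Prop :=
  ∀ y : ι → V, ∃ r ∈ S, ∀ i, r (v i) = y i

namespace IsTransitiveOn

lemma comp_injective {κ : Type*} {S : Set (Module.End F V)} {v : ι → V} (hv : IsTransitiveOn S v)
    {f : κ → ι} (hf : Function.Injective f) : IsTransitiveOn S (v ∘ f) := fun y => by
  obtain ⟨r, hrS, hr⟩ := hv (Function.extend f y 0)
  exact ⟨r, hrS, fun i => (hr (f i)).trans (hf.extend_apply y 0 i)⟩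

lemma snoc {n : ℕ} {S : Submodule F (Module.End F V)} {v : Fin n → V}
    (hv : IsTransitiveOn (S : Set (Module.End F V)) v) {u : V}
    (hu : ∀ y, ∃ r ∈ S, (∀ i, r (v i) = 0) ∧ r u = y) :
    IsTransitiveOn (S : Set (Module.End F V)) (Fin.snoc (α := fun _ => V) v u) := fun y => by
  obtain ⟨r, hrS, hr⟩ := hv (y ∘ Fin.castSucc)
  obtain ⟨s, hsS, hsv, hsu⟩ := hu (y (Fin.last n) - r u)
  refine ⟨r + s, add_mem hrS hsS, Fin.lastCases ?_ fun i => ?_⟩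
  · simp [hsu]
  · simp [hr, hsv]

lemma exists_linearMap_apply_eq {S : Submodule F (Module.End F V)} {v : ι → V}
    (hv : IsTransitiveOn (S : Set (Module.End F V)) v) {u : V}
    (hu : ∀ r ∈ S, (∀ i, r (v i) = 0) → r u = 0) :
    ∃ Φ : (ι → V) →ₗ[F] V, ∀ r ∈ S, Φ (fun i => r (v i)) = r u := by
  let eval : S →ₗ[F] (ι → V) := LinearMap.pi fun i => LinearMap.applyₗ (v i) ∘ₗ S.subtype
  have eval_surjective : Function.Surjective eval := fun y => by
    obtain ⟨r, hrS, hr⟩ := hv y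
    exact ⟨⟨r, hrS⟩, funext hr⟩
  have ker_le : LinearMap.ker eval ≤ LinearMap.ker (LinearMap.applyₗ u ∘ₗ S.subtype) :=
    fun r hr => hu r r.2 (congrFun hr)
  refine ⟨(LinearMap.ker eval).liftQ _ ker_le ∘ₗ
    (eval.quotKerEquivOfSurjective eval_surjective).symm, fun r hr => ?_⟩
  change (LinearMap.ker eval).liftQ _ ker_le
    ((eval.quotKerEquivOfSurjective eval_surjective).symm (eval ⟨r, hr⟩)) = r u
  rw [LinearMap.quotKerEquivOfSurjective_symm_apply]
  rfl

end IsTransitiveOn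

end Transitive

section Density

variable {F : Type*} [Field F] {G : Type*} [CommGroup G]
  {A : Type*} [NonUnitalNonAssocRing A] [Module F A] [SMulCommClass F A A] [IsScalarTower F A A]
  {𝒜 : G → Submodule F A}

lemma IsTransitiveOn.eq_zero_of_sum_apply_eq_zero {ι : Type*} [Fintype ι] {v : ι → A}
    (hv : IsTransitiveOn (MultAlg F (A := A) : Set (Module.End F A)) v) {c : ι → Module.End F A}
    (hc : ∀ i, c i ∈ centroid F) (hsum : ∑ i, c i (v i) = 0) (i : ι) : c i = 0 := by
  classical
  ext x
  obtain ⟨r, hrM, hr⟩ := hv (Pi.single i x)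
  calc c i x
    _ = ∑ j, c j ((Pi.single i x : ι → A) j) := by
      rw [Fintype.sum_eq_single i (by simp +contextual), Pi.single_eq_same]
    _ = r (∑ j, c j (v j)) := by
      simp only [map_sum, apply_comm_of_mem_multAlg_of_mem_centroid hrM (hc _), hr]
    _ = 0 := by rw [hsum, map_zero]

variable [DecidableEq G]

lemma forall_apply_eq_zero_or_forall_exists_apply_eq {ι : Type*} (h𝒜 : IsAlgGrading F 𝒜)
    (hA : IsGradedSimple F 𝒜) {v : ι → A} (hv : ∀ i, SetLike.IsHomogeneousElem 𝒜 (v i)) {u : A}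
    (hu : SetLike.IsHomogeneousElem 𝒜 u) :
    (∀ r ∈ MultAlg F (A := A), (∀ i, r (v i) = 0) → r u = 0) ∨
      ∀ y, ∃ r ∈ MultAlg F (A := A), (∀ i, r (v i) = 0) ∧ r u = y := by
  let I : Submodule F A := Submodule.map (LinearMap.applyₗ u)
    ((MultAlg F (A := A)).toSubmodule ⊓ ⨅ i, LinearMap.ker (LinearMap.applyₗ (v i)))
  have mem_I {y : A} : y ∈ I ↔ ∃ r ∈ MultAlg F (A := A), (∀ i, r (v i) = 0) ∧ r u = y := by
    simp [I, and_assoc]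
  have hI : IsMulIdeal F I := by
    intro a x hx
    obtain ⟨r, hrM, hrv, rfl⟩ := mem_I.1 hx
    exact ⟨mem_I.2 ⟨_, mul_mem (mulLeft_mem_multAlg a) hrM, fun i => by simp [hrv i], rfl⟩,
      mem_I.2 ⟨_, mul_mem (mulRight_mem_multAlg a) hrM, fun i => by simp [hrv i], rfl⟩⟩
  have hproj : ∀ x ∈ I, ∀ k, homogProj h𝒜.1 k x ∈ I := by
    intro x hx k
    obtain ⟨r, hrM, hrv, rfl⟩ := mem_I.1 hx
    obtain ⟨g, hug⟩ := hu
    obtain ⟨r', hr'M, hr'⟩ := exists_mem_multAlg_apply_eq_homogProj h𝒜 hrM (k * g⁻¹)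
    refine mem_I.2 ⟨r', hr'M, fun i => ?_, by rw [hr' g u hug, inv_mul_cancel_right]⟩
    obtain ⟨l, hl⟩ := hv i
    rw [hr' l _ hl, hrv i, map_zero]
  rcases eq_bot_or_eq_top_of_homogProj_mem h𝒜.1 hA hI hproj with hbot | htop
  · exact Or.inl fun r hrM hrv => (Submodule.mem_bot F).1 (hbot ▸ mem_I.2 ⟨r, hrM, hrv, rfl⟩)
  · exact Or.inr fun y => mem_I.1 (htop ▸ Submodule.mem_top)

lemma exists_mem_multAlg_apply_eq (h𝒜 : IsAlgGrading F 𝒜) (hA : IsGradedSimple F 𝒜) {u : A}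
    (hu : SetLike.IsHomogeneousElem 𝒜 u) (hu0 : u ≠ 0) (y : A) :
    ∃ r ∈ MultAlg F (A := A), r u = y := by
  rcases forall_apply_eq_zero_or_forall_exists_apply_eq h𝒜 hA (v := (nofun : Empty → A)) nofun hu
    with hzero | hall
  · refine absurd (eq_zero_of_forall_mul_eq_zero h𝒜 hA (fun a => ?_) fun a => ?_) hu0
    · exact hzero _ (mulLeft_mem_multAlg a) nofun
    · exact hzero _ (mulRight_mem_multAlg a) nofun
  · obtain ⟨r, hrM, -, hr⟩ := hall y
    exact ⟨r, hrM, hr⟩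

namespace IsTransitiveOn

variable {ι : Type*} {v : ι → A}

lemma apply_comm_of_forall_apply_eq
    (hv : IsTransitiveOn (MultAlg F (A := A) : Set (Module.End F A)) v) {u : A}
    {Φ : (ι → A) →ₗ[F] A} (hΦ : ∀ r ∈ MultAlg F (A := A), Φ (fun i => r (v i)) = r u)
    {s : Module.End F A} (hs : s ∈ MultAlg F (A := A)) (y : ι → A) :
    Φ (fun i => s (y i)) = s (Φ y) := by
  obtain ⟨r, hrM, hr⟩ := hv y
  obtain rfl : (fun i => r (v i)) = y := funext hr
  rw [hΦ r hrM]
  exact hΦ (s * r) (mul_mem hs hrM)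

variable [DecidableEq ι]

lemma comp_single_mem_centroid (hv : IsTransitiveOn (MultAlg F (A := A) : Set (Module.End F A)) v)
    {u : A} {Φ : (ι → A) →ₗ[F] A}
    (hΦ : ∀ r ∈ MultAlg F (A := A), Φ (fun i => r (v i)) = r u) (i : ι) :
    Φ ∘ₗ LinearMap.single F (fun _ => A) i ∈ centroid F := by
  have hcomm {s : Module.End F A} (hs : s ∈ MultAlg F (A := A)) (x : A) :
      Φ (Pi.single i (s x)) = s (Φ (Pi.single i x)) := by
    rw [← hv.apply_comm_of_forall_apply_eq hΦ hs]
    congr 1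
    exact funext fun j => (Pi.apply_single (fun _ => s) (fun _ => map_zero s) i x j).symm
  exact fun a x => ⟨hcomm (mulLeft_mem_multAlg a) x, hcomm (mulRight_mem_multAlg a) x⟩

lemma comp_single_mem_endGrading (h𝒜 : IsAlgGrading F 𝒜)
    (hv : IsTransitiveOn (MultAlg F (A := A) : Set (Module.End F A)) v) {d : ι → G}
    (hd : ∀ i, v i ∈ 𝒜 (d i)) {u : A} {g : G} (hu : u ∈ 𝒜 g) {Φ : (ι → A) →ₗ[F] A}
    (hΦ : ∀ r ∈ MultAlg F (A := A), Φ (fun i => r (v i)) = r u) (i : ι) :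
    Φ ∘ₗ LinearMap.single F (fun _ => A) i ∈ endGrading F 𝒜 (g * (d i)⁻¹) := by
  intro k x hx
  obtain ⟨r, hrM, hr⟩ := hv (Pi.single i x)
  obtain ⟨r', hr'M, hr'⟩ := exists_mem_multAlg_apply_eq_homogProj h𝒜 hrM (k * (d i)⁻¹)
  have hr'v : (fun j => r' (v j)) = Pi.single i x := by
    ext j
    rw [hr' _ _ (hd j), hr j]
    rcases eq_or_ne j i with rfl | hj
    · rw [Pi.single_eq_same, inv_mul_cancel_right, homogProj_of_mem h𝒜.1 hx]
    · rw [Pi.single_eq_of_ne hj, map_zero]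
  have hΦx : Φ (Pi.single i x) = homogProj h𝒜.1 (k * (d i)⁻¹ * g) (r u) := by
    rw [← hr'v, hΦ r' hr'M, hr' g u hu]
  rw [mul_right_comm, mul_comm g k, mul_right_comm]
  exact hΦx ▸ homogProj_mem h𝒜.1 _ _

end IsTransitiveOn

lemma span_eq_top_of_forall_isHomogeneousElem_mem (h𝒜 : DirectSum.IsInternal 𝒜) {s : Set A}
    (hs : ∀ u, SetLike.IsHomogeneousElem 𝒜 u →
      u ∈ Submodule.span (gradedCentroidSubalgebra 𝒜) s) :
    Submodule.span (gradedCentroidSubalgebra 𝒜) s = ⊤ := by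
  refine (Submodule.restrictScalars_eq_top_iff F _ A).1 (top_le_iff.1 ?_)
  rw [← h𝒜.submodule_iSup_eq_top]
  exact iSup_le fun g u hu => hs u ⟨g, hu⟩

lemma IsTransitiveOn.mem_span_range_of_forall_apply_eq_zero {ι : Type*} [Finite ι] {v : ι → A}
    (h𝒜 : IsAlgGrading F 𝒜) (hA : IsGradedSimple F 𝒜)
    (hv : IsTransitiveOn (MultAlg F (A := A) : Set (Module.End F A)) v)
    (hv𝒜 : ∀ i, SetLike.IsHomogeneousElem 𝒜 (v i)) {u : A} (hu𝒜 : SetLike.IsHomogeneousElem 𝒜 u)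
    (hu : ∀ r ∈ MultAlg F (A := A), (∀ i, r (v i) = 0) → r u = 0) :
    u ∈ Submodule.span (gradedCentroidSubalgebra 𝒜) (Set.range v) := by
  classical
  have := Fintype.ofFinite ι
  choose d hd using hv𝒜
  obtain ⟨g, hg⟩ := hu𝒜
  obtain ⟨Φ, hΦ⟩ := exists_linearMap_apply_eq (S := (MultAlg F (A := A)).toSubmodule) hv hu
  have hΦ_comm := fun {s} => hv.apply_comm_of_forall_apply_eq hΦ (s := s)
  have hkill : ∀ s ∈ MultAlg F (A := A), s (u - Φ v) = 0 := fun s hs => by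
    rw [map_sub, ← hΦ_comm hs, hΦ s hs, sub_self]
  have huΦ : u = Φ v := sub_eq_zero.1 <| eq_zero_of_forall_mul_eq_zero h𝒜 hA
    (fun a => hkill _ (mulLeft_mem_multAlg a)) fun a => hkill _ (mulRight_mem_multAlg a)
  refine (Submodule.mem_span_range_iff_exists_fun _).2
    ⟨fun i => ⟨Φ ∘ₗ LinearMap.single F (fun _ => A) i, Submodule.mem_iSup_of_mem (g * (d i)⁻¹)
      ⟨hv.comp_single_mem_centroid hΦ i, hv.comp_single_mem_endGrading h𝒜 hd hg hΦ i⟩⟩, ?_⟩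
  change ∑ i, Φ (Pi.single i (v i)) = u
  rw [← map_sum, Finset.univ_sum_single, huΦ]

lemma exists_isTransitiveOn_span_eq_top (h𝒜 : IsAlgGrading F 𝒜) (hA : IsGradedSimple F 𝒜)
    {d : ℕ} (hd : ∀ (n : ℕ) (v : Fin n → A),
      IsTransitiveOn (MultAlg F (A := A) : Set (Module.End F A)) v → n ≤ d) :
    ∃ (n : ℕ) (v : Fin n → A), IsTransitiveOn (MultAlg F (A := A) : Set (Module.End F A)) v ∧
      Submodule.span (gradedCentroidSubalgebra 𝒜) (Set.range v) = ⊤ := by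
  classical
  let P : ℕ → Prop := fun n => ∃ v : Fin n → A, (∀ i, SetLike.IsHomogeneousElem 𝒜 (v i)) ∧
    IsTransitiveOn (MultAlg F (A := A) : Set (Module.End F A)) v
  have hP_le : ∀ n, P n → n ≤ d := fun n ⟨v, _, hv⟩ => hd n v hv
  have hP_zero : P 0 := ⟨nofun, nofun, fun _ => ⟨0, zero_mem _, nofun⟩⟩
  obtain ⟨v, hv𝒜, hv⟩ := Nat.findGreatest_spec (Nat.zero_le d) hP_zero
  refine ⟨_, v, hv, span_eq_top_of_forall_isHomogeneousElem_mem h𝒜.1 fun u hu => ?_⟩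
  refine hv.mem_span_range_of_forall_apply_eq_zero h𝒜 hA hv𝒜 hu ?_
  refine (forall_apply_eq_zero_or_forall_exists_apply_eq h𝒜 hA hv𝒜 hu).resolve_right fun hall => ?_
  have hP_succ : P (Nat.findGreatest P d + 1) :=
    ⟨Fin.snoc (α := fun _ => A) v u, Fin.lastCases (by simpa using hu) (by simpa using hv𝒜),
      hv.snoc (S := (MultAlg F (A := A)).toSubmodule) hall⟩
  exact (Nat.lt_succ_self _).not_ge (Nat.le_findGreatest (hP_le _ hP_succ) hP_succ)

end Density

section PolynomialIdentity

variable {F : Type*} [Field F]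

lemma freeAlgebra_lift_eq_sum {X B : Type*} [Ring B] [Algebra F B] (ρ : X → B)
    (f : FreeAlgebra F X) :
    FreeAlgebra.lift F ρ f = (FreeAlgebra.equivMonoidAlgebraFreeMonoid f).coeff.sum
      fun w c => c • (w.toList.map ρ).prod := by
  have hlift : FreeAlgebra.lift F ρ = (MonoidAlgebra.lift F B (FreeMonoid X)
      (FreeMonoid.lift ρ)).comp FreeAlgebra.equivMonoidAlgebraFreeMonoid.toAlgHom := by
    ext i
    simp [FreeAlgebra.equivMonoidAlgebraFreeMonoid]
  rw [hlift, AlgHom.comp_apply, MonoidAlgebra.lift_apply]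
  simp only [FreeMonoid.lift_apply]
  rfl

variable {V : Type*} [AddCommGroup V] [Module F V] {X : Type*} {S : Set (Module.End F V)}

open scoped Classical in
lemma IsTransitiveOn.exists_forall_prod_apply_eq {l : List X} {E : {m : List X // m <:+ l} → V}
    (hE : IsTransitiveOn S E) :
    ∃ ρ : X → Module.End F V, (∀ j, ρ j ∈ S) ∧ ∀ m : List X,
      (m.map ρ).prod (E ⟨[], l.nil_suffix⟩) = if hm : m <:+ l then E ⟨m, hm⟩ else 0 := by
  choose ρ hρS hρ using fun j : X =>
    hE fun m => if hm : (j :: m.1) <:+ l then E ⟨j :: m.1, hm⟩ else 0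
  refine ⟨ρ, hρS, fun m => ?_⟩
  induction m with
  | nil => simp
  | cons j m ih =>
    rw [List.map_cons, List.prod_cons, Module.End.mul_apply, ih]
    by_cases hm : m <:+ l
    · rw [dif_pos hm, hρ]
    · rw [dif_neg hm, map_zero, dif_neg fun hjm => hm ((List.suffix_cons j m).trans hjm)]

lemma IsTransitiveOn.coeff_eq_zero_of_forall_lift_eq_zero [Nontrivial V] {f : FreeAlgebra F X}
    (hf : ∀ ρ : X → Module.End F V, (∀ j, ρ j ∈ S) → FreeAlgebra.lift F ρ f = 0)
    {w : FreeMonoid X} {E : {m : List X // m <:+ w.toList} → V} (hE : IsTransitiveOn S E) :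
    (FreeAlgebra.equivMonoidAlgebraFreeMonoid f).coeff w = 0 := by
  classical
  obtain ⟨ρ, hρS, hρ⟩ := hE.exists_forall_prod_apply_eq
  obtain ⟨y, hy⟩ := exists_ne (0 : V)
  obtain ⟨r, -, hr⟩ := hE fun m => if FreeMonoid.ofList m.1 = w then y else 0
  have hr_prod (m : FreeMonoid X) :
      r ((m.toList.map ρ).prod (E ⟨[], w.toList.nil_suffix⟩)) = if m = w then y else 0 := by
    rw [hρ]
    by_cases hm : m.toList <:+ w.toList
    · rw [dif_pos hm, hr]
      rfl
    · rw [dif_neg hm, map_zero, if_neg]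
      rintro rfl
      exact hm (List.suffix_refl _)
  have hsum := congrArg (fun T => r (T (E ⟨[], w.toList.nil_suffix⟩)))
    ((freeAlgebra_lift_eq_sum ρ f).symm.trans (hf ρ hρS))
  simpa [Finsupp.sum, LinearMap.sum_apply, hr_prod, hy] using hsum

lemma exists_forall_isTransitiveOn_le [Nontrivial V] (hS : SatisfiesOrdinaryPI F S) :
    ∃ d : ℕ, ∀ (n : ℕ) (v : Fin n → V), IsTransitiveOn S v → n ≤ d := by
  obtain ⟨f, hf0, hf⟩ := hS
  obtain ⟨w, hw⟩ : ∃ w, (FreeAlgebra.equivMonoidAlgebraFreeMonoid f).coeff w ≠ 0 := by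
    by_contra! hcoeff
    exact hf0 <| FreeAlgebra.equivMonoidAlgebraFreeMonoid.injective <|
      (MonoidAlgebra.coeff_injective (Finsupp.ext hcoeff)).trans (map_zero _).symm
  refine ⟨w.toList.length, fun n v hv => ?_⟩
  by_contra! hlt
  let len : {m : List ℕ // m <:+ w.toList} → Fin n :=
    fun m => ⟨m.1.length, m.2.length_le.trans_lt hlt⟩
  have len_injective : Function.Injective len := fun m m' h =>
    Subtype.ext <| (List.suffix_of_suffix_length_le m.2 m'.2 (Fin.val_eq_of_eq h).le).eq_of_length
      (Fin.val_eq_of_eq h)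
  exact hw ((hv.comp_injective len_injective).coeff_eq_zero_of_forall_lift_eq_zero hf)

end PolynomialIdentity

section Capelli

lemma alternatingMap_eq_zero_of_span_eq_top {R M N ι κ : Type*} [CommRing R] [AddCommGroup M]
    [Module R M] [AddCommGroup N] [Module R N] [Fintype ι] [Fintype κ]
    (hcard : Fintype.card κ < Fintype.card ι) {w : κ → M}
    (hw : Submodule.span R (Set.range w) = ⊤) (Q : M [⋀^ι]→ₗ[R] N) : Q = 0 := by
  classical
  have hpullback : Q.compLinearMap (Fintype.linearCombination R w) = 0 :=
    (Pi.basisFun R κ).ext_alternating fun f hf =>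
      absurd (Fintype.card_le_of_injective f hf) hcard.not_ge
  ext x
  have hsurj : Function.Surjective (Fintype.linearCombination R w) :=
    LinearMap.range_eq_top.1 ((Fintype.range_linearCombination R w).trans hw)
  choose c hc using fun i => hsurj (x i)
  obtain rfl : (fun i => Fintype.linearCombination R w (c i)) = x := funext hc
  exact DFunLike.congr_fun hpullback c

lemma semiconj_prod_ofFn {R S M N : Type*} [CommRing R] [CommRing S] [AddCommGroup M] [Module R M]
    [AddCommGroup N] [Module S N] (φ : M → N) {n : ℕ} {f : Fin n → Module.End R M}
    {g : Fin n → Module.End S N} (hfg : ∀ i, Function.Semiconj φ (f i) (g i)) :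
    Function.Semiconj φ (List.ofFn f).prod (List.ofFn g).prod := by
  induction n with
  | zero => exact fun _ => by simp
  | succ n ih =>
    simp only [List.ofFn_succ, List.prod_cons]
    exact (hfg 0).comp_right (ih fun i => hfg i.succ)

variable {R : Type*} [CommRing R] {B : Type*} [NonUnitalNonAssocRing B] [Module R B]
  [SMulCommClass R B B] [IsScalarTower R B B] {n : ℕ}

variable (R) in
/-- The Capelli-type map obtained by alternating `s ((r₁ x₁) * s ((r₂ x₂) * ⋯ s ((rₙ xₙ) * b)))`
in `x₁, …, xₙ`, where `s` and the `rᵢ` stand for multiplication operators. -/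
noncomputable def capelli (s : Module.End R B) (r : Fin n → Module.End R B) (b : B) :
    B [⋀^Fin n]→ₗ[R] B :=
  MultilinearMap.alternatization <| (LinearMap.applyₗ b).compMultilinearMap <|
    (MultilinearMap.mkPiAlgebraFin R n (Module.End R B)).compLinearMap fun i =>
      LinearMap.mulLeft R s ∘ₗ LinearMap.mul R B ∘ₗ r i

lemma capelli_apply (s : Module.End R B) (r : Fin n → Module.End R B) (b : B) (x : Fin n → B) :
    capelli R s r b x = ∑ σ : Equiv.Perm (Fin n), Equiv.Perm.sign σ •
      (List.ofFn fun i => s * LinearMap.mulLeft R (r i (x (σ i)))).prod b :=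
  MultilinearMap.alternatization_apply _ _

lemma map_capelli {S P : Type*} [CommRing S] [NonUnitalNonAssocRing P] [Module S P]
    [SMulCommClass S P P] [IsScalarTower S P P] (φ : P →ₙ+* B) {s : Module.End S P}
    {r : Fin n → Module.End S P} {s' : Module.End R B} {r' : Fin n → Module.End R B}
    (hs : Function.Semiconj φ s s') (hr : ∀ i, Function.Semiconj φ (r i) (r' i)) (b : P)
    (x : Fin n → P) : φ (capelli S s r b x) = capelli R s' r' (φ b) (φ ∘ x) := by
  rw [capelli_apply, capelli_apply, map_sum]
  refine Finset.sum_congr rfl fun σ _ => ?_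
  rw [Units.smul_def, Units.smul_def, map_zsmul]
  congr 1
  refine semiconj_prod_ofFn φ (fun i => ?_) b
  have hmul : Function.Semiconj φ (LinearMap.mulLeft S (r i (x (σ i))))
      (LinearMap.mulLeft R (r' i (φ (x (σ i))))) := fun y =>
    (map_mul φ _ _).trans (congrArg (· * φ y) (hr i (x (σ i))))
  exact hs.comp_right hmul

lemma capelli_eq_zero_of_forall_apply_smul {S : Type*} [CommRing S] [Module S B]
    [SMulCommClass S B B] [IsScalarTower S B B] {κ : Type*} [Fintype κ]
    (hcard : Fintype.card κ < n) {w : κ → B} (hw : Submodule.span S (Set.range w) = ⊤)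
    {s : Module.End R B} (hs : ∀ (c : S) x, s (c • x) = c • s x) {r : Fin n → Module.End R B}
    (hr : ∀ i (c : S) x, r i (c • x) = c • r i x) (b : B) : capelli R s r b = 0 := by
  have exists_end (t : Module.End R B) (ht : ∀ (c : S) x, t (c • x) = c • t x) :
      ∃ t' : Module.End S B, Function.Semiconj (NonUnitalRingHom.id B) t t' :=
    ⟨{ toFun := t, map_add' := map_add t, map_smul' := ht }, fun _ => rfl⟩
  obtain ⟨s', hs'⟩ := exists_end s hs
  choose r' hr' using fun i => exists_end (r i) (hr i)
  ext x
  calc capelli R s r b x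
    _ = capelli S s' r' b x := map_capelli (NonUnitalRingHom.id B) hs' hr' b x
    _ = 0 := by
      rw [alternatingMap_eq_zero_of_span_eq_top (by simpa using hcard) hw (capelli S s' r' b),
        AlternatingMap.zero_apply]

lemma capelli_apply_eq_of_apply_eq_single {s : Module.End R B} {r : Fin n → Module.End R B}
    {a b : B} {v : Fin n → B} (hs : s (a * b) = b)
    (hr : ∀ i j, r i (v j) = (Pi.single i a : Fin n → B) j) : capelli R s r b v = b := by
  rw [capelli_apply, Fintype.sum_eq_single 1]
  · rw [Equiv.Perm.sign_one, one_smul]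
    refine (MulAction.stabilizerSubmonoid (Module.End R B) b).list_prod_mem ?_
    refine List.forall_mem_ofFn_iff.2 fun i => ?_
    simpa [MulAction.mem_stabilizerSubmonoid_iff, hr] using hs
  · intro σ hσ
    obtain ⟨i, hi⟩ : ∃ i, σ i ≠ i := by
      by_contra! hfix
      exact hσ (Equiv.ext hfix)
    have hzero : s * LinearMap.mulLeft R (r i (v (σ i))) = 0 := by
      rw [hr, Pi.single_eq_of_ne hi, LinearMap.mulLeft_zero_eq_zero, mul_zero]
    rw [List.prod_eq_zero (List.mem_ofFn.2 ⟨i, hzero⟩), LinearMap.zero_apply, smul_zero]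

end Capelli

section CapelliGradedSimple

variable {F : Type*} [Field F] {G : Type*} [CommGroup G] [DecidableEq G]
  {A : Type*} [NonUnitalNonAssocRing A] [Module F A] [SMulCommClass F A A] [IsScalarTower F A A]
  {𝒜 : G → Submodule F A}

lemma capelli_eq_zero_of_span_eq_top (h𝒜 : IsAlgGrading F 𝒜) (hA : IsGradedSimple F 𝒜)
    {n m : ℕ} (hmn : m < n) {w : Fin m → A}
    (hw : Submodule.span (gradedCentroidSubalgebra 𝒜) (Set.range w) = ⊤) {s : Module.End F A}
    (hs : s ∈ MultAlg F (A := A)) {r : Fin n → Module.End F A}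
    (hr : ∀ i, r i ∈ MultAlg F (A := A)) (b : A) : capelli F s r b = 0 := by
  let : CommRing (gradedCentroidSubalgebra 𝒜) :=
    { (inferInstance : Ring (gradedCentroidSubalgebra 𝒜)) with
      mul_comm := fun c d => Subtype.ext <|
        centroid_commute h𝒜 hA (coe_mem_centroid c) (coe_mem_centroid d) }
  have : SMulCommClass (gradedCentroidSubalgebra 𝒜) A A :=
    ⟨fun c a x => (coe_mem_centroid c a x).1⟩
  have : IsScalarTower (gradedCentroidSubalgebra 𝒜) A A :=
    ⟨fun c x a => (coe_mem_centroid c a x).2.symm⟩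
  exact capelli_eq_zero_of_forall_apply_smul (by simpa using hmn) hw
    (apply_smul_of_mem_multAlg hs) (fun i => apply_smul_of_mem_multAlg (hr i)) b

lemma IsTransitiveOn.exists_capelli_apply_ne_zero (h𝒜 : IsAlgGrading F 𝒜)
    (hA : IsGradedSimple F 𝒜) {n : ℕ} {v : Fin n → A}
    (hv : IsTransitiveOn (MultAlg F (A := A) : Set (Module.End F A)) v) :
    ∃ s ∈ MultAlg F (A := A), ∃ r : Fin n → Module.End F A,
      (∀ i, r i ∈ MultAlg F (A := A)) ∧ ∃ b, capelli F s r b v ≠ 0 := by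
  obtain ⟨a, b, hab, hab0⟩ := exists_homogeneous_mul_ne_zero h𝒜 hA
  obtain ⟨s, hsM, hs⟩ := exists_mem_multAlg_apply_eq h𝒜 hA hab hab0 b
  choose r hrM hr using fun i => hv (Pi.single i a)
  refine ⟨s, hsM, r, hrM, b, ?_⟩
  rw [capelli_apply_eq_of_apply_eq_single hs hr]
  exact right_ne_zero_of_mul hab0

end CapelliGradedSimple

section Transfer

variable {F : Type*} [Field F] {A : Type*} [NonUnitalNonAssocRing A] [Module F A]
  [SMulCommClass F A A] [IsScalarTower F A A]

variable (F) in
/-- The subalgebra of the multiplication algebra generated by the left and right multiplications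
by elements of `S`. -/
def multAlgOn (S : Set A) : NonUnitalSubalgebra F (Module.End F A) :=
  NonUnitalAlgebra.adjoin F (LinearMap.mulLeft F '' S ∪ LinearMap.mulRight F '' S)

lemma multAlgOn_mono {S T : Set A} (hST : S ⊆ T) : multAlgOn F S ≤ multAlgOn F T :=
  NonUnitalAlgebra.adjoin_mono (Set.union_subset_union (Set.image_mono hST) (Set.image_mono hST))

lemma multAlgOn_le_multAlg (S : Set A) : multAlgOn F S ≤ MultAlg F :=
  NonUnitalAlgebra.adjoin_mono
    (Set.union_subset_union (Set.image_subset_range _ _) (Set.image_subset_range _ _))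

lemma exists_finset_mem_multAlgOn {r : Module.End F A} (hr : r ∈ MultAlg F (A := A)) :
    ∃ S : Finset A, r ∈ multAlgOn F (S : Set A) := by
  classical
  have hdirected : Directed (· ≤ ·) fun S : Finset A => multAlgOn F (S : Set A) :=
    Monotone.directed_le fun S T hST => multAlgOn_mono (Finset.coe_subset.2 hST)
  have hle : MultAlg F (A := A) ≤ ⨆ S : Finset A, multAlgOn F (S : Set A) := by
    refine NonUnitalAlgebra.adjoin_le ?_
    rintro _ (⟨a, rfl⟩ | ⟨a, rfl⟩)
    · exact le_iSup (fun S : Finset A => multAlgOn F (S : Set A)) {a}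
        (NonUnitalAlgebra.subset_adjoin F (Or.inl ⟨a, by simp, rfl⟩))
    · exact le_iSup (fun S : Finset A => multAlgOn F (S : Set A)) {a}
        (NonUnitalAlgebra.subset_adjoin F (Or.inr ⟨a, by simp, rfl⟩))
  have hr' : r ∈ ((⨆ S : Finset A, multAlgOn F (S : Set A) :) : Set (Module.End F A)) := hle hr
  rw [NonUnitalSubalgebra.coe_iSup_of_directed hdirected] at hr'
  exact Set.mem_iUnion.1 hr'

variable {P : Type*} [NonUnitalNonAssocRing P] [Module F P] [SMulCommClass F P P]
  [IsScalarTower F P P]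

/-- The subalgebra of `End_F P × End_F A` generated by the pairs of corresponding multiplications
by `p` and `φ p`; it relates the multiplication operators of `P` to those of `A`. -/
def multAlgPairs (φ : P →ₙₐ[F] A) :
    NonUnitalSubalgebra F (Module.End F P × Module.End F A) :=
  NonUnitalAlgebra.adjoin F
    (Set.range (fun p => (LinearMap.mulLeft F p, LinearMap.mulLeft F (φ p))) ∪
      Set.range fun p => (LinearMap.mulRight F p, LinearMap.mulRight F (φ p)))

lemma semiconj_of_mem_multAlgPairs {φ : P →ₙₐ[F] A} {q : Module.End F P × Module.End F A}
    (hq : q ∈ multAlgPairs φ) : Function.Semiconj φ q.1 q.2 := by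
  induction hq using NonUnitalAlgebra.adjoin_induction with
  | mem q hq =>
    rcases hq with ⟨p, rfl⟩ | ⟨p, rfl⟩
    · exact fun x => map_mul φ p x
    · exact fun x => map_mul φ x p
  | add q q' _ _ h h' => exact fun x => (map_add φ _ _).trans (congrArg₂ _ (h x) (h' x))
  | zero => exact fun _ => map_zero φ
  | smul c q _ h => exact fun x => (map_smul φ c _).trans (congrArg _ (h x))
  | mul q q' _ _ h h' => exact h.comp_right h'

lemma map_fst_multAlgPairs (φ : P →ₙₐ[F] A) :
    (multAlgPairs φ).map (NonUnitalAlgHom.fst F _ _) = MultAlg F := by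
  rw [multAlgPairs, NonUnitalAlgHom.map_adjoin, Set.image_union, ← Set.range_comp,
    ← Set.range_comp]
  rfl

lemma map_snd_multAlgPairs (φ : P →ₙₐ[F] A) :
    (multAlgPairs φ).map (NonUnitalAlgHom.snd F _ _) = multAlgOn F (Set.range φ) := by
  rw [multAlgPairs, NonUnitalAlgHom.map_adjoin, Set.image_union, ← Set.range_comp,
    ← Set.range_comp, multAlgOn, ← Set.range_comp, ← Set.range_comp]
  rfl

lemma exists_mem_multAlg_semiconj_of_mem (φ : P →ₙₐ[F] A) {r : Module.End F P}
    (hr : r ∈ MultAlg F (A := P)) : ∃ r' ∈ MultAlg F (A := A), Function.Semiconj φ r r' := by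
  rw [← map_fst_multAlgPairs φ] at hr
  obtain ⟨q, hq, rfl⟩ := hr
  have hq₂ : q.2 ∈ multAlgOn F (Set.range φ) := map_snd_multAlgPairs φ ▸ ⟨q, hq, rfl⟩
  exact ⟨q.2, multAlgOn_le_multAlg _ hq₂, semiconj_of_mem_multAlgPairs hq⟩

lemma exists_mem_multAlg_semiconj_of_mem_multAlgOn_range {φ : P →ₙₐ[F] A} {r : Module.End F A}
    (hr : r ∈ multAlgOn F (Set.range φ)) :
    ∃ r' ∈ MultAlg F (A := P), Function.Semiconj φ r' r := by
  rw [← map_snd_multAlgPairs φ] at hr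
  obtain ⟨q, hq, rfl⟩ := hr
  exact ⟨q.1, map_fst_multAlgPairs φ ▸ ⟨q, hq, rfl⟩, semiconj_of_mem_multAlgPairs hq⟩

end Transfer

section Comparison

variable {F : Type*} [Field F] {A : Type*} [NonUnitalNonAssocRing A] [Module F A]
  [SMulCommClass F A A] [IsScalarTower F A A]

lemma exists_subset_range_lift {S : Set A} (hS : S.Countable) (hne : S.Nonempty) :
    ∃ ν : ℕ → A, S ⊆ Set.range (FreeNonUnitalNonAssocAlgebra.lift F ν) := by
  obtain ⟨ν, rfl⟩ := hS.exists_eq_range hne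
  refine ⟨ν, Set.range_subset_iff.2 fun i => ?_⟩
  exact ⟨FreeNonUnitalNonAssocAlgebra.of F i, FreeNonUnitalNonAssocAlgebra.lift_of_apply F ν i⟩

lemma exists_lift_capelli_eq {n : ℕ} {s : Module.End F A} (hs : s ∈ MultAlg F (A := A))
    {r : Fin n → Module.End F A} (hr : ∀ i, r i ∈ MultAlg F (A := A)) (b : A) (v : Fin n → A) :
    ∃ s' ∈ MultAlg F (A := FreeNonUnitalNonAssocAlgebra F ℕ),
      ∃ r' : Fin n → Module.End F (FreeNonUnitalNonAssocAlgebra F ℕ), (∀ i, r' i ∈ MultAlg F) ∧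
        ∃ b' x ν, FreeNonUnitalNonAssocAlgebra.lift F ν (capelli F s' r' b' x) =
          capelli F s r b v := by
  obtain ⟨S, hS⟩ := exists_finset_mem_multAlgOn hs
  choose R hR using fun i => exists_finset_mem_multAlgOn (hr i)
  have hcountable : (((S : Set A) ∪ ⋃ i, (R i : Set A)) ∪ ({b} ∪ Set.range v)).Countable :=
    ((S.countable_toSet.union (Set.countable_iUnion fun i => (R i).countable_toSet)).union
      ((Set.countable_singleton b).union (Set.countable_range v)))
  obtain ⟨ν, hν⟩ := exists_subset_range_lift (F := F) hcountable ⟨b, by simp⟩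
  simp only [Set.union_subset_iff, Set.iUnion_subset_iff, Set.singleton_subset_iff,
    Set.range_subset_iff] at hν
  obtain ⟨⟨hSν, hRν⟩, ⟨b', rfl⟩, hv⟩ := hν
  obtain ⟨s', hs', hss'⟩ :=
    exists_mem_multAlg_semiconj_of_mem_multAlgOn_range (multAlgOn_mono hSν hS)
  choose r' hr' hrr' using fun i =>
    exists_mem_multAlg_semiconj_of_mem_multAlgOn_range (multAlgOn_mono (hRν i) (hR i))
  choose x hx using hv
  obtain rfl : (fun i => FreeNonUnitalNonAssocAlgebra.lift F ν (x i)) = v := funext hx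
  exact ⟨s', hs', r', hr', b', x, ν,
    map_capelli (FreeNonUnitalNonAssocAlgebra.lift F ν : _ →ₙ+* A) hss' hrr' b' x⟩

variable {G : Type*} [CommGroup G] {𝒜 : G → Submodule F A}

lemma exists_gradedCentroid_sum_apply_eq {ι : Type*} [Fintype ι] {v : ι → A}
    (hv : Submodule.span (gradedCentroidSubalgebra 𝒜) (Set.range v) = ⊤) (x : A) :
    ∃ c : ι → Module.End F A, (∀ i, c i ∈ gradedCentroid F 𝒜) ∧ x = ∑ i, c i (v i) := by
  obtain ⟨c, rfl⟩ :=
    (Submodule.mem_span_range_iff_exists_fun _).1 (hv ▸ Submodule.mem_top : x ∈ _)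
  exact ⟨fun i => c i, fun i => (c i).2, rfl⟩

variable [DecidableEq G]

lemma isPI_capelli_of_span_eq_top (h𝒜 : IsAlgGrading F 𝒜) (hA : IsGradedSimple F 𝒜) {n m : ℕ}
    (hmn : m < n) {w : Fin m → A}
    (hw : Submodule.span (gradedCentroidSubalgebra 𝒜) (Set.range w) = ⊤)
    {s : Module.End F (FreeNonUnitalNonAssocAlgebra F ℕ)} (hs : s ∈ MultAlg F)
    {r : Fin n → Module.End F (FreeNonUnitalNonAssocAlgebra F ℕ)} (hr : ∀ i, r i ∈ MultAlg F)
    (b : FreeNonUnitalNonAssocAlgebra F ℕ) (x : Fin n → FreeNonUnitalNonAssocAlgebra F ℕ) :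
    IsPI F (A := A) (capelli F s r b x) := by
  intro ν
  obtain ⟨s', hs', hss'⟩ :=
    exists_mem_multAlg_semiconj_of_mem (FreeNonUnitalNonAssocAlgebra.lift F ν) hs
  choose r' hr' hrr' using fun i =>
    exists_mem_multAlg_semiconj_of_mem (FreeNonUnitalNonAssocAlgebra.lift F ν) (hr i)
  refine (map_capelli (FreeNonUnitalNonAssocAlgebra.lift F ν : _ →ₙ+* A) hss' hrr' b x).trans ?_
  rw [capelli_eq_zero_of_span_eq_top h𝒜 hA hmn hw hs' hr', AlternatingMap.zero_apply]

lemma IsTransitiveOn.le_of_forall_isPI {H B : Type*} [CommGroup H] [DecidableEq H]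
    [NonUnitalNonAssocRing B] [Module F B] [SMulCommClass F B B] [IsScalarTower F B B]
    {ℬ : H → Submodule F B} (h𝒜 : IsAlgGrading F 𝒜) (hA : IsGradedSimple F 𝒜)
    (hℬ : IsAlgGrading F ℬ) (hB : IsGradedSimple F ℬ)
    (hPI : ∀ f, IsPI F (A := B) f → IsPI F (A := A) f) {n m : ℕ} {v : Fin n → A}
    (hv : IsTransitiveOn (MultAlg F (A := A) : Set (Module.End F A)) v) {w : Fin m → B}
    (hw : Submodule.span (gradedCentroidSubalgebra ℬ) (Set.range w) = ⊤) : n ≤ m := by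
  by_contra! hmn
  obtain ⟨s, hs, r, hr, b, hne⟩ := hv.exists_capelli_apply_ne_zero h𝒜 hA
  obtain ⟨s', hs', r', hr', b', x, ν, hlift⟩ := exists_lift_capelli_eq hs hr b v
  exact hne (hlift.symm.trans (hPI _ (isPI_capelli_of_span_eq_top hℬ hB hmn hw hs' hr' b' x) ν))

end Comparison

theorem same_identities_implies_same_dim_over_graded_centroid_general
    {F : Type*} [Field F] {G H : Type*} [CommGroup G] [DecidableEq G] [CommGroup H] [DecidableEq H]
    {A B : Type*}
    [NonUnitalNonAssocRing A] [Module F A] [SMulCommClass F A A] [IsScalarTower F A A]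
    [NonUnitalNonAssocRing B] [Module F B] [SMulCommClass F B B] [IsScalarTower F B B]
    {𝒜 : G → Submodule F A} {ℬ : H → Submodule F B}
    (hgrA : IsAlgGrading F 𝒜) (hgrB : IsAlgGrading F ℬ)
    (hsimpA : IsGradedSimple F 𝒜) (hsimpB : IsGradedSimple F ℬ)
    (hPIA : SatisfiesOrdinaryPI F (MultAlg F (A := A) : Set (Module.End F A)))
    (hsame : ∀ f : FreeNonUnitalNonAssocAlgebra F ℕ, IsPI F (A := A) f ↔ IsPI F (A := B) f) :
    ∃ (n : ℕ) (v : Fin n → A) (w : Fin n → B),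
      (∀ x : A, ∃ c : Fin n → Module.End F A,
          (∀ i, c i ∈ gradedCentroid F 𝒜) ∧ x = ∑ i, c i (v i)) ∧
      (∀ c : Fin n → Module.End F A, (∀ i, c i ∈ gradedCentroid F 𝒜) →
          ∑ i, c i (v i) = 0 → ∀ i, c i = 0) ∧
      (∀ y : B, ∃ d : Fin n → Module.End F B,
          (∀ i, d i ∈ gradedCentroid F ℬ) ∧ y = ∑ i, d i (w i)) ∧
      (∀ d : Fin n → Module.End F B, (∀ i, d i ∈ gradedCentroid F ℬ) →
          ∑ i, d i (w i) = 0 → ∀ i, d i = 0) := by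
  obtain ⟨a, b, hab⟩ := hsimpA.1
  have : Nontrivial A := ⟨a * b, 0, hab⟩
  obtain ⟨d, hd⟩ := exists_forall_isTransitiveOn_le hPIA
  obtain ⟨n, v, hv, hv_span⟩ := exists_isTransitiveOn_span_eq_top hgrA hsimpA hd
  have hle_n : ∀ (m : ℕ) (w : Fin m → B),
      IsTransitiveOn (MultAlg F (A := B) : Set (Module.End F B)) w → m ≤ n := fun m w hw =>
    hw.le_of_forall_isPI hgrB hsimpB hgrA hsimpA (fun f => (hsame f).1) hv_span
  obtain ⟨m, w, hw, hw_span⟩ := exists_isTransitiveOn_span_eq_top hgrB hsimpB hle_n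
  have hn_le : n ≤ m :=
    hv.le_of_forall_isPI hgrA hsimpA hgrB hsimpB (fun f => (hsame f).2) hw_span
  obtain rfl : m = n := (hle_n m w hw).antisymm hn_le
  exact ⟨m, v, w, exists_gradedCentroid_sum_apply_eq hv_span,
    fun c hc => hv.eq_zero_of_sum_apply_eq_zero fun i => gradedCentroid_le_centroid 𝒜 (hc i),
    exists_gradedCentroid_sum_apply_eq hw_span,
    fun c hc => hw.eq_zero_of_sum_apply_eq_zero fun i => gradedCentroid_le_centroid ℬ (hc i)⟩

/-- If two `G`-graded simple algebras whose multiplication algebras satisfy ordinary polynomial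
identities satisfy the same ordinary polynomial identities, then they have the same dimension
over their graded centroids: there is a common `n` and bases of `A` over `Γ(A)` and of `B` over
`Γ(B)` with `n` elements. -/
theorem same_identities_implies_same_dim_over_graded_centroid
    {F : Type*} [Field F] {G : Type*} [CommGroup G] [DecidableEq G]
    {A B : Type*}
    [NonUnitalNonAssocRing A] [Module F A] [SMulCommClass F A A] [IsScalarTower F A A]
    [NonUnitalNonAssocRing B] [Module F B] [SMulCommClass F B B] [IsScalarTower F B B]
    (𝒜 : G → Submodule F A) (ℬ : G → Submodule F B)
    (hgrA : IsAlgGrading F 𝒜) (hgrB : IsAlgGrading F ℬ)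
    (hsimpA : IsGradedSimple F 𝒜) (hsimpB : IsGradedSimple F ℬ)
    (hPIA : SatisfiesOrdinaryPI F (MultAlg F (A := A) : Set (Module.End F A)))
    (hPIB : SatisfiesOrdinaryPI F (MultAlg F (A := B) : Set (Module.End F B)))
    (hsame : ∀ f : FreeNonUnitalNonAssocAlgebra F ℕ, IsPI F (A := A) f ↔ IsPI F (A := B) f) :
    ∃ (n : ℕ) (v : Fin n → A) (w : Fin n → B),
      -- `v` is a basis of `A` over `Γ(A)`
      (∀ x : A, ∃ c : Fin n → Module.End F A,
          (∀ i, c i ∈ gradedCentroid F 𝒜) ∧ x = ∑ i, c i (v i)) ∧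
      (∀ c : Fin n → Module.End F A, (∀ i, c i ∈ gradedCentroid F 𝒜) →
          ∑ i, c i (v i) = 0 → ∀ i, c i = 0) ∧
      -- `w` is a basis of `B` over `Γ(B)`
      (∀ y : B, ∃ d : Fin n → Module.End F B,
          (∀ i, d i ∈ gradedCentroid F ℬ) ∧ y = ∑ i, d i (w i)) ∧
      (∀ d : Fin n → Module.End F B, (∀ i, d i ∈ gradedCentroid F ℬ) →
          ∑ i, d i (w i) = 0 → ∀ i, d i = 0) := by
  exact same_identities_implies_same_dim_over_graded_centroid_general hgrA hgrB hsimpA hsimpB hPIA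
    hsame
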